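/- Let n ≥ 3 and let k be an integer with k ≥ 2⌈log_3(n/4)⌉ + 4. Then the regular palm S_n(k) satisfies χ_L(S_n(k)) = ⌈log_3(n/4)⌉ + 3. -/

import Mathlib

open SimpleGraph

/-- Distance from a vertex to a set of vertices, `d(u,S) = min {d(u,v) : v ∈ S}`. -/
noncomputable def distToSet {V : Type*} (G : SimpleGraph V) (u : V) (S : Set V) : ℕ :=
  sInf (G.dist u '' S)

/-- `c` is a locating coloring of `G` with `k` colors: a proper coloring such that any two
distinct vertices are resolved by some color class. -/
def IsLocatingColoring {V : Type*} (G : SimpleGraph V) {k : ℕ} (c : V → Fin k) : Prop :=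
  (∀ u v : V, G.Adj u v → c u ≠ c v) ∧
  ∀ u v : V, u ≠ v →
    ∃ i : Fin k, distToSet G u (c ⁻¹' {i}) ≠ distToSet G v (c ⁻¹' {i})

/-- The locating chromatic number `χ_L(G)`: the least `k` admitting a locating `k`-coloring. -/
noncomputable def locatingChromaticNumber {V : Type*} (G : SimpleGraph V) : ℕ :=
  sInf {k : ℕ | ∃ c : V → Fin k, IsLocatingColoring G c}

/-- The vertex set of the palm `S_n(a_1, …, a_n)`: a hub `none` and, for each leg
`i : Fin n` (representing leg `i+1`), vertices `j : Fin (a (i+1))`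
(vertex `some ⟨i, j⟩` represents `a_{i+1, j+1}`). -/
def PalmVert (n : ℕ) (a : ℕ → ℕ) : Type :=
  Option ((i : Fin n) × Fin (a ((i : ℕ) + 1)))

/-- The palm `S_n(a_1, …, a_n)`: the star `K_{1,n}` whose `i`-th edge has been subdivided
`a_i - 1` times; the hub is joined to the first vertex of each leg, and consecutive
vertices along a leg are adjacent. -/
def Palm (n : ℕ) (a : ℕ → ℕ) : SimpleGraph (PalmVert n a) :=
  SimpleGraph.fromRel fun u v =>
    match u, v with
    | none, some ⟨_, j⟩ => (j : ℕ) = 0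
    | some ⟨i, j⟩, some ⟨i', j'⟩ => (i : ℕ) = (i' : ℕ) ∧ (j' : ℕ) = (j : ℕ) + 1
    | _, _ => False

section DistToSet

variable {V : Type*} {G : SimpleGraph V}

theorem distToSet_le {S : Set V} (u : V) {v : V} (hv : v ∈ S) : distToSet G u S ≤ G.dist u v :=
  Nat.sInf_le ⟨v, hv, rfl⟩

theorem exists_distToSet_eq {S : Set V} (hS : S.Nonempty) (u : V) :
    ∃ v ∈ S, distToSet G u S = G.dist u v := by
  obtain ⟨v, hv, h⟩ := Nat.sInf_mem (hS.image (G.dist u))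
  exact ⟨v, hv, h.symm⟩

/-- A potential that vanishes only at `u`, grows by at most one along edges, and can be decreased
by one at every other vertex is the distance from `u`. -/
theorem dist_eq_of_potential (u : V) (φ : V → ℕ) (h0 : ∀ v, φ v = 0 ↔ v = u)
    (hlip : ∀ v w, G.Adj v w → φ w ≤ φ v + 1)
    (hdesc : ∀ v, φ v ≠ 0 → ∃ w, G.Adj w v ∧ φ v = φ w + 1) (v : V) : G.dist u v = φ v := by
  have hwalk : ∀ n v, φ v = n → ∃ p : G.Walk u v, p.length = n := by
    intro n
    induction n with
    | zero =>
      intro v hv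
      obtain rfl := (h0 v).1 hv
      exact ⟨.nil, rfl⟩
    | succ n ih =>
      intro v hv
      obtain ⟨w, hw, hvw⟩ := hdesc v (by omega)
      obtain ⟨p, hp⟩ := ih w (by omega)
      exact ⟨p.concat hw, by simp [hp]⟩
  have hle : ∀ {a b : V} (p : G.Walk a b), φ b ≤ φ a + p.length := by
    intro a b p
    induction p with
    | nil => simp
    | cons h p ih =>
      have := hlip _ _ h
      simp only [Walk.length_cons]
      omega
  obtain ⟨p, hp⟩ := hwalk _ v rfl
  obtain ⟨p', hp'⟩ := p.reachable.exists_walk_length_eq_dist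
  have h1 := hle p'
  have h2 := dist_le p
  have h3 := (h0 u).2 rfl
  omega

end DistToSet

section RegularPalm

variable {n k : ℕ}

/-- The explicit distance function of the regular palm. -/
def palmDist : PalmVert n (fun _ => k) → PalmVert n (fun _ => k) → ℕ
  | none, none => 0
  | none, some ⟨_, j⟩ => (j : ℕ) + 1
  | some ⟨_, j⟩, none => (j : ℕ) + 1
  | some ⟨i, j⟩, some ⟨i', j'⟩ =>
    if i = i' then ((j : ℕ) - j') + (j' - j) else (j : ℕ) + j' + 2

/-- The vertex of leg `i` at height `j + 1`. -/
def legVert (i : Fin n) (j : Fin k) : PalmVert n (fun _ => k) := some ⟨i, j⟩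

/-- The hub of the palm. -/
def hub : PalmVert n (fun _ => k) := none

theorem palmVert_cases (v : PalmVert n (fun _ => k)) :
    v = hub ∨ ∃ (i : Fin n) (j : Fin k), v = legVert i j := by
  rcases v with _ | ⟨i, j⟩
  · exact .inl rfl
  · exact .inr ⟨i, j, rfl⟩

theorem legVert_ne_hub (i : Fin n) (j : Fin k) : legVert i j ≠ hub := nofun

theorem legVert_inj {i i' : Fin n} {j j' : Fin k} :
    legVert i j = legVert i' j' ↔ i = i' ∧ j = j' := by
  constructor
  · intro h
    cases h
    exact ⟨rfl, rfl⟩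
  · rintro ⟨rfl, rfl⟩
    rfl

theorem palm_adj_hub {i : Fin n} {j : Fin k} :
    (Palm n (fun _ => k)).Adj hub (legVert i j) ↔ (j : ℕ) = 0 := by
  rw [Palm, fromRel_adj]
  exact ⟨fun h => h.2.resolve_right id, fun h => ⟨(legVert_ne_hub i j).symm, .inl h⟩⟩

theorem palm_adj_leg {i i' : Fin n} {j j' : Fin k} :
    (Palm n (fun _ => k)).Adj (legVert i j) (legVert i' j') ↔
      i = i' ∧ ((j' : ℕ) = j + 1 ∨ (j : ℕ) = j' + 1) := by
  rw [Palm, fromRel_adj]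
  constructor
  · rintro ⟨-, h | h⟩
    · exact ⟨Fin.ext h.1, .inl h.2⟩
    · exact ⟨Fin.ext h.1.symm, .inr h.2⟩
  · rintro ⟨rfl, h⟩
    refine ⟨fun h' => ?_, h.imp (fun h => ⟨rfl, h⟩) (fun h => ⟨rfl, h⟩)⟩
    have := (legVert_inj.1 h').2
    omega

@[simp] theorem palmDist_hub_hub : palmDist (hub : PalmVert n (fun _ => k)) hub = 0 := rfl

@[simp] theorem palmDist_hub_leg (i : Fin n) (j : Fin k) :
    palmDist hub (legVert i j) = j + 1 := rfl

@[simp] theorem palmDist_leg_hub (i : Fin n) (j : Fin k) :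
    palmDist (legVert i j) hub = j + 1 := rfl

@[simp] theorem palmDist_leg_leg (i i' : Fin n) (j j' : Fin k) :
    palmDist (legVert i j) (legVert i' j') =
      if i = i' then ((j : ℕ) - j') + (j' - j) else (j : ℕ) + j' + 2 := rfl

theorem palmDist_eq_zero_iff (u v : PalmVert n (fun _ => k)) : palmDist u v = 0 ↔ v = u := by
  obtain rfl | ⟨i, j, rfl⟩ := palmVert_cases u <;> obtain rfl | ⟨i', j', rfl⟩ := palmVert_cases v
  · simp
  · simp [legVert_ne_hub]
  · simp [(legVert_ne_hub _ _).symm]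
  · rw [palmDist_leg_leg, legVert_inj, Fin.ext_iff (a := j')]
    split_ifs with h
    · subst h
      simp only [true_and]
      omega
    · simp [Ne.symm h]

theorem palmDist_le_of_adj (u : PalmVert n (fun _ => k)) {v w : PalmVert n (fun _ => k)}
    (h : (Palm n (fun _ => k)).Adj v w) : palmDist u w ≤ palmDist u v + 1 := by
  obtain rfl | ⟨i', j', rfl⟩ := palmVert_cases v <;>
    obtain rfl | ⟨i'', j'', rfl⟩ := palmVert_cases w
  · omega
  · rw [palm_adj_hub] at h
    obtain rfl | ⟨i, j, rfl⟩ := palmVert_cases u <;> simp <;> try split_ifs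
    all_goals omega
  · rw [adj_comm, palm_adj_hub] at h
    obtain rfl | ⟨i, j, rfl⟩ := palmVert_cases u <;> (simp; try split_ifs)
    all_goals omega
  · obtain ⟨rfl, h⟩ := palm_adj_leg.1 h
    obtain rfl | ⟨i, j, rfl⟩ := palmVert_cases u <;> simp <;> try split_ifs
    all_goals omega

theorem exists_adj_palmDist (u v : PalmVert n (fun _ => k)) (h : palmDist u v ≠ 0) :
    ∃ w, (Palm n (fun _ => k)).Adj w v ∧ palmDist u v = palmDist u w + 1 := by
  have step : ∀ (i : Fin n) (j : Fin k), (palmDist u (legVert i j) =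
      palmDist u hub + (j + 1)) →
      ∃ w, (Palm n (fun _ => k)).Adj w (legVert i j) ∧
        palmDist u (legVert i j) = palmDist u w + 1 := by
    intro i j hu
    by_cases hj : (j : ℕ) = 0
    · exact ⟨hub, palm_adj_hub.2 hj, by omega⟩
    · refine ⟨legVert i ⟨j - 1, by omega⟩, palm_adj_leg.2 ⟨rfl, .inl (by simp; omega)⟩, ?_⟩
      obtain rfl | ⟨i', j', rfl⟩ := palmVert_cases u
      · simp
        omega
      · simp only [palmDist_leg_leg, palmDist_leg_hub] at hu ⊢
        split_ifs at hu ⊢ <;> omega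
  obtain rfl | ⟨i', j', rfl⟩ := palmVert_cases v
  · obtain rfl | ⟨i, j, rfl⟩ := palmVert_cases u
    · simp at h
    · exact ⟨legVert i ⟨0, j.pos⟩, (palm_adj_hub.2 rfl).symm, by simp⟩
  · obtain rfl | ⟨i, j, rfl⟩ := palmVert_cases u
    · exact step _ _ (by simp)
    · by_cases hi : i = i'
      · subst hi
        simp only [palmDist_leg_leg, if_true] at h
        rcases lt_or_gt_of_ne (show (j : ℕ) ≠ j' by omega) with hj | hj
        · refine ⟨legVert i ⟨j' - 1, by omega⟩, palm_adj_leg.2 ⟨rfl, .inl (by simp; omega)⟩, ?_⟩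
          simp
          omega
        · refine ⟨legVert i ⟨j' + 1, by omega⟩, palm_adj_leg.2 ⟨rfl, .inr (by simp)⟩, ?_⟩
          simp
          omega
      · exact step _ _ (by simp [hi]; omega)

theorem palm_dist (u v : PalmVert n (fun _ => k)) :
    (Palm n (fun _ => k)).dist u v = palmDist u v :=
  dist_eq_of_potential u _ (palmDist_eq_zero_iff u) (fun _ _ => palmDist_le_of_adj u)
    (exists_adj_palmDist u) v

end RegularPalm

section LowerBound

variable {n k : ℕ}

theorem palm_distToSet_le_of_adj {u v : PalmVert n (fun _ => k)}
    (h : (Palm n (fun _ => k)).Adj u v) (S : Set (PalmVert n (fun _ => k))) :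
    distToSet (Palm n (fun _ => k)) u S ≤ distToSet (Palm n (fun _ => k)) v S + 1 := by
  rcases S.eq_empty_or_nonempty with rfl | hS
  · simp [distToSet]
  · obtain ⟨w, hw, hvw⟩ := exists_distToSet_eq (G := Palm n (fun _ => k)) hS v
    have h1 := distToSet_le (G := Palm n (fun _ => k)) u hw
    have h2 := palmDist_le_of_adj w h.symm
    rw [← palm_dist, ← palm_dist, dist_comm, dist_comm (u := w)] at h2
    omega

theorem palm_distToSet_pos {u : PalmVert n (fun _ => k)} {S : Set (PalmVert n (fun _ => k))}
    (hS : S.Nonempty) (hu : u ∉ S) : 0 < distToSet (Palm n (fun _ => k)) u S := by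
  obtain ⟨w, hw, h⟩ := exists_distToSet_eq (G := Palm n (fun _ => k)) hS u
  rw [h, palm_dist, Nat.pos_iff_ne_zero, Ne, palmDist_eq_zero_iff]
  rintro rfl
  exact hu hw

/-- The vectors of distances from the neighbours of the hub to the color classes are confined to
a union of boxes indexed by the colors of these neighbours. -/
theorem exists_card_le_of_isLocatingColoring {q : ℕ} (hn : 0 < n) (hk : 0 < k)
    {c : PalmVert n (fun _ => k) → Fin q} (hc : IsLocatingColoring (Palm n (fun _ => k)) c) :
    ∃ a r : ℕ, q = a + 1 + r + 1 ∧ n ≤ (a + 1) * (2 ^ a * 3 ^ r) := by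
  classical
  obtain ⟨hprop, hloc⟩ := hc
  let v : Fin n → PalmVert n (fun _ => k) := fun i => legVert i ⟨0, hk⟩
  have hadj : ∀ i, (Palm n (fun _ => k)).Adj hub (v i) := fun i => palm_adj_hub.2 rfl
  let A : Finset (Fin q) := Finset.univ.image fun i => c (v i)
  have hhub : c hub ∉ A := by
    simp only [A, Finset.mem_image, Finset.mem_univ, true_and, not_exists]
    exact fun i hi => hprop _ _ (hadj i) hi.symm
  let δ : Fin n → Fin q → ℕ := fun i x => distToSet (Palm n (fun _ => k)) (v i) (c ⁻¹' {x})
  have hδ : Function.Injective δ := by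
    intro i i' h
    by_contra hne
    obtain ⟨x, hx⟩ := hloc (v i) (v i') fun h' => hne (legVert_inj.1 h').1
    exact hx (congrFun h x)
  let T : Fin q → Fin q → Finset ℕ := fun a x =>
    if x = c hub then {1} else if x = a then {0} else if x ∈ A then {1, 2} else
      {distToSet (Palm n (fun _ => k)) hub (c ⁻¹' {x}) - 1,
        distToSet (Palm n (fun _ => k)) hub (c ⁻¹' {x}),
        distToSet (Palm n (fun _ => k)) hub (c ⁻¹' {x}) + 1}
  have hmem : ∀ i x, δ i x ∈ T (c (v i)) x := by
    intro i x
    have h1 := palm_distToSet_le_of_adj (hadj i) (c ⁻¹' {x})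
    have h2 := palm_distToSet_le_of_adj (hadj i).symm (c ⁻¹' {x})
    simp only [T, δ]
    split_ifs with h h' h''
    · subst h
      have h3 := palm_distToSet_pos (u := v i) (S := c ⁻¹' {c hub}) ⟨hub, rfl⟩
        fun h => hprop _ _ (hadj i) h.symm
      have h4 := distToSet_le (G := Palm n (fun _ => k)) (v i) (S := c ⁻¹' {c hub}) (v := hub) rfl
      rw [dist_comm, dist_eq_one_iff_adj.2 (hadj i)] at h4
      simp only [Finset.mem_singleton]
      omega
    · subst h'
      have h4 := distToSet_le (G := Palm n (fun _ => k)) (v i) (S := c ⁻¹' {c (v i)}) (v := v i) rfl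
      rw [SimpleGraph.dist_self] at h4
      simp only [Finset.mem_singleton]
      omega
    · obtain ⟨i', -, rfl⟩ := Finset.mem_image.1 h''
      have h3 := palm_distToSet_pos (u := v i) (S := c ⁻¹' {c (v i')}) ⟨v i', rfl⟩
        fun h => h' h.symm
      have h4 := distToSet_le (G := Palm n (fun _ => k)) hub (S := c ⁻¹' {c (v i')}) (v := v i') rfl
      rw [dist_eq_one_iff_adj.2 (hadj i')] at h4
      simp only [Finset.mem_insert, Finset.mem_singleton]
      omega
    · simp only [Finset.mem_insert, Finset.mem_singleton]
      omega
  have hcard : ∀ a ∈ A, (Fintype.piFinset (T a)).card ≤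
      2 ^ (A.card - 1) * 3 ^ (insert (c hub) A)ᶜ.card := by
    intro a ha
    have hle : ∀ x, (T a x).card ≤
        (if x ∈ A.erase a then 2 else 1) * (if x ∈ (insert (c hub) A)ᶜ then 3 else 1) := by
      intro x
      simp only [T]
      split_ifs <;> simp_all [Finset.card_le_three]
    rw [Fintype.card_piFinset]
    refine (Finset.prod_le_prod' fun x _ => hle x).trans_eq ?_
    rw [Finset.prod_mul_distrib, Finset.prod_ite_mem, Finset.prod_ite_mem]
    simp [ha]
  have hn_le : n ≤ A.card * (2 ^ (A.card - 1) * 3 ^ (insert (c hub) A)ᶜ.card) := by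
    calc n = (Finset.univ.image δ).card := by
          rw [Finset.card_image_of_injective _ hδ, Finset.card_univ, Fintype.card_fin]
      _ ≤ (A.biUnion fun a => Fintype.piFinset (T a)).card := by
          refine Finset.card_le_card fun w hw => ?_
          obtain ⟨i, -, rfl⟩ := Finset.mem_image.1 hw
          exact Finset.mem_biUnion.2 ⟨c (v i), Finset.mem_image_of_mem _ (Finset.mem_univ i),
            Fintype.mem_piFinset.2 (hmem i)⟩
      _ ≤ _ := Finset.card_biUnion_le_card_mul _ _ _ hcard
  have hA : 0 < A.card :=
    Finset.card_pos.2 ⟨c (v ⟨0, hn⟩), Finset.mem_image_of_mem _ (Finset.mem_univ _)⟩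
  have hq := Finset.card_add_card_compl (insert (c hub) A)
  rw [Finset.card_insert_of_notMem hhub, Fintype.card_fin] at hq
  refine ⟨A.card - 1, (insert (c hub) A)ᶜ.card, by omega, ?_⟩
  rwa [Nat.sub_add_cancel hA]

theorem succ_mul_two_pow_le (a : ℕ) : (a + 2) * 2 ^ (a + 1) ≤ 4 * 3 ^ a := by
  induction a with
  | zero => norm_num
  | succ a ih =>
    have : (a + 1 + 2) * 2 ^ (a + 1 + 1) ≤ 3 * ((a + 2) * 2 ^ (a + 1)) := by
      have : 0 < 2 ^ (a + 1) := by positivity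
      rw [pow_succ 2 (a + 1)]
      nlinarith
    rw [pow_succ 3]
    omega

/-- A regular palm with a locating `q`-coloring has at most `4 * 3 ^ (q - 3)` legs. -/
theorem exists_le_four_mul_three_pow {q : ℕ} (hn : 3 ≤ n) (hk : 0 < k)
    {c : PalmVert n (fun _ => k) → Fin q} (hc : IsLocatingColoring (Palm n (fun _ => k)) c) :
    ∃ m : ℕ, q = m + 3 ∧ n ≤ 4 * 3 ^ m := by
  obtain ⟨a, r, hq, hle⟩ := exists_card_le_of_isLocatingColoring (by omega) hk hc
  rcases a with _ | a
  · rcases r with _ | r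
    · simp at hle
      omega
    · refine ⟨r, by omega, ?_⟩
      rw [pow_succ] at hle
      omega
  · refine ⟨a + r, by omega, hle.trans ?_⟩
    rw [← mul_assoc, pow_add 3, ← mul_assoc]
    exact Nat.mul_le_mul_right _ (succ_mul_two_pow_le a)

end LowerBound

section Construction

/-- The two alternating background colors of a leg of type `t` at height `h`. -/
def baseColor (t : Fin 4) (h : ℕ) : ℕ :=
  if h % 2 = 1 then ![1, 2, 1, 2] t else ![2, 1, 0, 0] t

/-- The color among `0, 1, 2` that does not occur on a leg of type `t`. -/
def absentColor (t : Fin 4) : ℕ := ![0, 0, 2, 1] t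

/-- The distance from the hub to the color absent from a leg of type `t`. -/
def absentDist (t : Fin 4) : ℕ := ![0, 0, 1, 1] t

/-- The color at height `h` of a leg of type `t`: the background color, except that the color
`x + 3` is placed at height `2 * x + 3 + f x` whenever `x < m` and `f x < 2`. -/
def legColor (m : ℕ) (t : Fin 4) (f : ℕ → ℕ) (h : ℕ) : ℕ :=
  if 3 ≤ h ∧ (h - 3) / 2 < m ∧ f ((h - 3) / 2) = (h - 3) % 2 then (h - 3) / 2 + 3
  else baseColor t h

theorem baseColor_lt (t : Fin 4) (h : ℕ) : baseColor t h < 3 := by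
  unfold baseColor
  split_ifs <;> fin_cases t <;> simp

theorem baseColor_ne_succ (t : Fin 4) (h : ℕ) : baseColor t h ≠ baseColor t (h + 1) := by
  unfold baseColor
  split_ifs
  · omega
  · fin_cases t <;> simp
  · fin_cases t <;> simp
  · omega

theorem baseColor_ne_absentColor (t : Fin 4) (h : ℕ) : baseColor t h ≠ absentColor t := by
  unfold baseColor absentColor
  split_ifs <;> fin_cases t <;> simp

theorem absentColor_lt (t : Fin 4) : absentColor t < 3 := by
  fin_cases t <;> simp [absentColor]

theorem eq_baseColor_of_ne_absentColor {t : Fin 4} {x : ℕ} (hx : x < 3) (h : x ≠ absentColor t) :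
    x = baseColor t 1 ∨ x = baseColor t 2 := by
  fin_cases t <;> simp [absentColor, baseColor] at h ⊢ <;> omega

theorem absentColor_eq_zero_iff (t : Fin 4) : absentColor t = 0 ↔ absentDist t = 0 := by
  fin_cases t <;> simp [absentColor, absentDist]

theorem absentDist_le (t : Fin 4) : absentDist t ≤ 1 := by
  fin_cases t <;> simp [absentDist]

theorem lt_two_iff_absentDist (t : Fin 4) : t.val < 2 ↔ absentDist t = 0 := by
  fin_cases t <;> simp [absentDist]

theorem eq_of_absentColor_eq {s t : Fin 4} (h : absentColor s = absentColor t)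
    (ht : absentDist t ≠ 0) : s = t := by
  fin_cases s <;> fin_cases t <;> simp [absentColor, absentDist] at h ht ⊢

theorem absentDist_congr {s t : Fin 4} (h : absentColor s = absentColor t) :
    absentDist s = absentDist t := by
  fin_cases s <;> fin_cases t <;> simp [absentColor, absentDist] at h ⊢

theorem baseColor_eq_one {t : Fin 4} (ht : t.val < 2) {h : ℕ} (h1 : baseColor t h = 1) :
    (h + 1) % 2 = t := by
  unfold baseColor at h1
  split_ifs at h1 <;> fin_cases t <;> simp at h1 ht ⊢ <;> omega

theorem legColor_eq_add_three_iff {m : ℕ} {t : Fin 4} {f : ℕ → ℕ} {h x : ℕ} :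
    legColor m t f h = x + 3 ↔ x < m ∧ f x < 2 ∧ h = 2 * x + 3 + f x := by
  have hb := baseColor_lt t h
  unfold legColor
  split_ifs with hc
  · obtain ⟨h3, hm, hf⟩ := hc
    constructor
    · intro hx
      obtain rfl : (h - 3) / 2 = x := by omega
      omega
    · rintro ⟨hxm, hx2, rfl⟩
      omega
  · constructor
    · omega
    · rintro ⟨hxm, hx2, rfl⟩
      have hx : (2 * x + 3 + f x - 3) / 2 = x := by omega
      rw [hx] at hc
      omega

theorem legColor_eq_baseColor {m : ℕ} {t : Fin 4} {f : ℕ → ℕ} {h : ℕ}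
    (hlt : legColor m t f h < 3) : legColor m t f h = baseColor t h := by
  unfold legColor at hlt ⊢
  split_ifs at hlt ⊢
  · omega
  · rfl

theorem legColor_of_lt_three {m : ℕ} {t : Fin 4} {f : ℕ → ℕ} {h : ℕ} (hh : h < 3) :
    legColor m t f h = baseColor t h := by
  rw [legColor, if_neg (by omega)]

theorem legColor_lt (m : ℕ) (t : Fin 4) (f : ℕ → ℕ) (h : ℕ) : legColor m t f h < m + 3 := by
  have := baseColor_lt t h
  unfold legColor
  split_ifs <;> omega

theorem legColor_ne_succ (m : ℕ) (t : Fin 4) (f : ℕ → ℕ) (h : ℕ) :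
    legColor m t f h ≠ legColor m t f (h + 1) := by
  intro heq
  by_cases hlt : legColor m t f h < 3
  · exact baseColor_ne_succ t h (by
      rw [← legColor_eq_baseColor hlt, heq, legColor_eq_baseColor (heq ▸ hlt)])
  · obtain ⟨x, hx⟩ := Nat.exists_eq_add_of_le' (not_lt.1 hlt)
    have h1 := legColor_eq_add_three_iff.1 hx
    have h2 := legColor_eq_add_three_iff.1 (heq ▸ hx)
    omega

variable {n k : ℕ}

/-- The coloring of the regular palm whose leg `i` is colored by `legColor m (τ i) (f i)`. -/
def palmColor (m : ℕ) (τ : Fin n → Fin 4) (f : Fin n → ℕ → ℕ) : PalmVert n (fun _ => k) → ℕ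
  | none => 0
  | some ⟨i, j⟩ => legColor m (τ i) (f i) (j + 1)

/-- The distance from `v` to the vertices of color `x`. -/
noncomputable def colorDist (m : ℕ) (τ : Fin n → Fin 4) (f : Fin n → ℕ → ℕ)
    (v : PalmVert n (fun _ => k)) (x : ℕ) : ℕ :=
  distToSet (Palm n (fun _ => k)) v {w | palmColor m τ f w = x}

variable {m : ℕ} {τ : Fin n → Fin 4} {f : Fin n → ℕ → ℕ}

@[simp] theorem palmColor_hub : palmColor m τ f (hub : PalmVert n (fun _ => k)) = 0 := rfl

@[simp] theorem palmColor_leg (i : Fin n) (j : Fin k) :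
    palmColor m τ f (legVert i j) = legColor m (τ i) (f i) (j + 1) := rfl

theorem palmColor_lt (v : PalmVert n (fun _ => k)) : palmColor m τ f v < m + 3 := by
  obtain rfl | ⟨i, j, rfl⟩ := palmVert_cases v
  · simp
  · exact legColor_lt _ _ _ _

theorem palmColor_ne_of_adj {u v : PalmVert n (fun _ => k)}
    (h : (Palm n (fun _ => k)).Adj u v) : palmColor m τ f u ≠ palmColor m τ f v := by
  have hhub : ∀ (i : Fin n) (j : Fin k), (Palm n (fun _ => k)).Adj hub (legVert i j) →
      palmColor m τ f (legVert i j) ≠ 0 := by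
    intro i j hij
    rw [palm_adj_hub] at hij
    rw [palmColor_leg, hij, legColor_of_lt_three (by norm_num)]
    generalize τ i = t
    fin_cases t <;> simp [baseColor]
  obtain rfl | ⟨i, j, rfl⟩ := palmVert_cases u <;> obtain rfl | ⟨i', j', rfl⟩ := palmVert_cases v
  · simp at h
  · exact (hhub _ _ h).symm
  · exact hhub _ _ h.symm
  · obtain ⟨rfl, h | h⟩ := palm_adj_leg.1 h
    · rw [palmColor_leg, palmColor_leg, h]
      exact legColor_ne_succ _ _ _ _
    · rw [palmColor_leg, palmColor_leg, h]
      exact (legColor_ne_succ _ _ _ _).symm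

theorem colorDist_le (v w : PalmVert n (fun _ => k)) :
    colorDist m τ f v (palmColor m τ f w) ≤ palmDist v w := by
  rw [← palm_dist]
  exact distToSet_le v rfl

theorem exists_colorDist_eq (v w : PalmVert n (fun _ => k)) :
    ∃ w', palmColor m τ f w' = palmColor m τ f w ∧
      colorDist m τ f v (palmColor m τ f w) = palmDist v w' := by
  obtain ⟨w', hw', h⟩ := exists_distToSet_eq (G := Palm n (fun _ => k))
    (S := {w' | palmColor m τ f w' = palmColor m τ f w}) ⟨w, rfl⟩ v
  exact ⟨w', hw', h.trans (palm_dist _ _)⟩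

theorem colorDist_le_of_ne_absentColor (hk : 2 ≤ k) (i : Fin n) (j : Fin k) {x : ℕ} (hx : x < 3)
    (hne : x ≠ absentColor (τ i)) :
    colorDist m τ f (legVert i j) x ≤ max (j : ℕ) 1 := by
  rcases eq_baseColor_of_ne_absentColor hx hne with h | h
  · have := colorDist_le (m := m) (τ := τ) (f := f) (legVert i j) (legVert i ⟨0, by omega⟩)
    rw [palmColor_leg, legColor_of_lt_three (by simp), palmDist_leg_leg, if_pos rfl] at this
    rw [h]
    simp only [zero_add] at this
    omega
  · have := colorDist_le (m := m) (τ := τ) (f := f) (legVert i j) (legVert i ⟨1, by omega⟩)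
    rw [palmColor_leg, legColor_of_lt_three (by simp), palmDist_leg_leg, if_pos rfl] at this
    rw [h]
    simp only [Nat.reduceAdd] at this
    omega

theorem colorDist_hub_absentColor_le (hk : 0 < k) (h0 : ∃ i, τ i = 0) (h1 : ∃ i, τ i = 1)
    {t : Fin 4} :
    colorDist m τ f (hub : PalmVert n (fun _ => k)) (absentColor t) ≤ absentDist t := by
  have hleg : ∀ i : Fin n, baseColor (τ i) 1 = absentColor t →
      colorDist m τ f (hub : PalmVert n (fun _ => k)) (absentColor t) ≤ 1 := by
    intro i hi
    have := colorDist_le (m := m) (τ := τ) (f := f) hub (legVert i ⟨0, hk⟩)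
    rwa [palmColor_leg, legColor_of_lt_three (by simp), hi] at this
  have hzero : colorDist m τ f (hub : PalmVert n (fun _ => k)) 0 ≤ 0 :=
    colorDist_le (m := m) (τ := τ) (f := f) hub hub
  obtain ⟨i0, hi0⟩ := h0
  obtain ⟨i1, hi1⟩ := h1
  fin_cases t
  · exact hzero
  · exact hzero
  · exact hleg i1 (by simp [hi1, baseColor, absentColor])
  · exact hleg i0 (by simp [hi0, baseColor, absentColor])

theorem colorDist_absentColor (hk : 0 < k) (h0 : ∃ i, τ i = 0) (h1 : ∃ i, τ i = 1)
    (i : Fin n) (j : Fin k) :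
    colorDist m τ f (legVert i j) (absentColor (τ i)) = j + 1 + absentDist (τ i) := by
  have key : ∃ w : PalmVert n (fun _ => k), palmColor m τ f w = absentColor (τ i) ∧
      palmDist (legVert i j) w = j + 1 + absentDist (τ i) := by
    have hleg : ∀ i' : Fin n, baseColor (τ i') 1 = absentColor (τ i) →
        absentDist (τ i) = 1 → ∃ w : PalmVert n (fun _ => k),
        palmColor m τ f w = absentColor (τ i) ∧
        palmDist (legVert i j) w = j + 1 + absentDist (τ i) := by
      intro i' hi' h
      refine ⟨legVert i' ⟨0, hk⟩, ?_, ?_⟩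
      · rw [palmColor_leg, legColor_of_lt_three (by simp), ← hi']
      · rw [palmDist_leg_leg, if_neg]
        · simp only
          omega
        · rintro rfl
          exact baseColor_ne_absentColor _ _ hi'
    obtain ⟨i0, hi0⟩ := h0
    obtain ⟨i1, hi1⟩ := h1
    have hcases : τ i = 0 ∨ τ i = 1 ∨ τ i = 2 ∨ τ i = 3 := by
      generalize τ i = t
      fin_cases t <;> simp
    rcases hcases with h | h | h | h
    · exact ⟨hub, by simp [h, absentColor], by simp [h, absentDist]⟩
    · exact ⟨hub, by simp [h, absentColor], by simp [h, absentDist]⟩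
    · exact hleg i1 (by simp [h, hi1, baseColor, absentColor]) (by simp [h, absentDist])
    · exact hleg i0 (by simp [h, hi0, baseColor, absentColor]) (by simp [h, absentDist])
  obtain ⟨w, hw, hd⟩ := key
  apply le_antisymm
  · rw [← hd, ← hw]
    exact colorDist_le _ _
  · obtain ⟨w', hw', h⟩ := exists_colorDist_eq (m := m) (τ := τ) (f := f) (legVert i j) w
    rw [hw] at h hw'
    rw [h]
    have := absentDist_le (τ i)
    obtain rfl | ⟨i', j', rfl⟩ := palmVert_cases w'
    · have := (absentColor_eq_zero_iff (τ i)).1 hw'.symm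
      simp [this]
    · rw [palmDist_leg_leg, if_neg]
      · omega
      · rintro rfl
        rw [palmColor_leg] at hw'
        have hlt := hw'.trans_lt (absentColor_lt (τ i))
        exact baseColor_ne_absentColor _ _ ((legColor_eq_baseColor hlt).symm.trans hw')

theorem exists_leg_of_palmColor_eq {w : PalmVert n (fun _ => k)} {x : ℕ}
    (hw : palmColor m τ f w = x + 3) :
    ∃ i j, w = legVert i j ∧ f i x < 2 ∧ (j : ℕ) = 2 * x + 2 + f i x := by
  obtain rfl | ⟨i, j, rfl⟩ := palmVert_cases w
  · simp at hw
  · obtain ⟨-, h2, h⟩ := legColor_eq_add_three_iff.1 hw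
    exact ⟨i, j, rfl, h2, by omega⟩

theorem colorDist_add_three (hk : 2 * m + 2 ≤ k) {x : ℕ} (hx : x < m) {i : Fin n}
    (hi : f i x < 2) (j : Fin k) : colorDist m τ f (legVert i j) (x + 3) =
      (j - (2 * x + 2 + f i x)) + (2 * x + 2 + f i x - j) := by
  have hw : palmColor m τ f (legVert i (⟨2 * x + 2 + f i x, by omega⟩ : Fin k)) = x + 3 := by
    rw [palmColor_leg, legColor_eq_add_three_iff]
    exact ⟨hx, hi, by simp only; omega⟩
  rw [← hw]
  apply le_antisymm
  · refine (colorDist_le _ _).trans_eq ?_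
    rw [palmDist_leg_leg, if_pos rfl]
  · obtain ⟨w', hw', h⟩ := exists_colorDist_eq (m := m) (τ := τ) (f := f) (legVert i j)
      (legVert i (⟨2 * x + 2 + f i x, by omega⟩ : Fin k))
    rw [h]
    obtain ⟨i', j', rfl, h2, hj'⟩ := exists_leg_of_palmColor_eq (hw'.trans hw)
    rw [palmDist_leg_leg]
    split_ifs with hii
    · subst hii
      omega
    · omega

theorem le_colorDist_add_three {x : ℕ} {i : Fin n} (hi : 2 ≤ f i x) (j : Fin k)
    {w : PalmVert n (fun _ => k)} (hw : palmColor m τ f w = x + 3) :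
    (j : ℕ) + (2 * x + 4) ≤ colorDist m τ f (legVert i j) (x + 3) := by
  rw [← hw]
  obtain ⟨w', hw', h⟩ := exists_colorDist_eq (m := m) (τ := τ) (f := f) (legVert i j) w
  obtain ⟨i', j', rfl, h2, hj'⟩ := exists_leg_of_palmColor_eq (hw'.trans hw)
  rw [h, palmDist_leg_leg, if_neg]
  · omega
  · rintro rfl
    omega

theorem eq_of_colorDist_eq (hk : 2 * m + 2 ≤ k) {x : ℕ} (hx : x < m) (hf : ∀ i, f i x ≤ 2)
    {i i' : Fin n} {j : Fin k} (h : colorDist m τ f (legVert i j) (x + 3) =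
      colorDist m τ f (legVert i' j) (x + 3)) : f i x = f i' x := by
  have hmix : ∀ {a b : Fin n}, f a x < 2 → 2 ≤ f b x →
      colorDist m τ f (legVert a j) (x + 3) ≠ colorDist m τ f (legVert b j) (x + 3) := by
    intro a b ha hb
    have hw : palmColor m τ f (legVert a (⟨2 * x + 2 + f a x, by omega⟩ : Fin k)) = x + 3 := by
      rw [palmColor_leg, legColor_eq_add_three_iff]
      exact ⟨hx, ha, by simp only; omega⟩
    have h1 := le_colorDist_add_three hb j hw
    rw [colorDist_add_three hk hx ha]
    omega
  have hi := hf i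
  have hi' := hf i'
  rcases lt_or_ge (f i x) 2 with h1 | h1 <;> rcases lt_or_ge (f i' x) 2 with h2 | h2
  · rw [colorDist_add_three hk hx h1, colorDist_add_three hk hx h2] at h
    omega
  · exact absurd h (hmix h1 h2)
  · exact absurd h.symm (hmix h2 h1)
  · omega

theorem colorDist_one_mod_two (hk : 2 ≤ k) {i : Fin n} (hi : (τ i).val < 2) (j : Fin k) :
    colorDist m τ f (legVert i j) 1 % 2 = (j + τ i) % 2 := by
  have hne : 1 ≠ absentColor (τ i) := by
    rw [(absentColor_eq_zero_iff _).2 ((lt_two_iff_absentDist _).1 hi)]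
    exact one_ne_zero
  have hle := colorDist_le_of_ne_absentColor (m := m) (f := f) hk i j (by norm_num) hne
  obtain ⟨w, hw⟩ : ∃ w : PalmVert n (fun _ => k), palmColor m τ f w = 1 := by
    rcases eq_baseColor_of_ne_absentColor (by norm_num) hne with h | h
    · exact ⟨legVert i ⟨0, by omega⟩, by
        rw [palmColor_leg, legColor_of_lt_three (by simp), ← h]⟩
    · exact ⟨legVert i ⟨1, by omega⟩, by
        rw [palmColor_leg, legColor_of_lt_three (by simp), ← h]⟩
  obtain ⟨w', hw', h⟩ := exists_colorDist_eq (m := m) (τ := τ) (f := f) (legVert i j) w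
  rw [hw] at h hw'
  rw [h] at hle ⊢
  obtain rfl | ⟨i', j', rfl⟩ := palmVert_cases w'
  · simp at hw'
  · rw [palmDist_leg_leg] at hle ⊢
    split_ifs at hle ⊢ with hii
    · subst hii
      rw [palmColor_leg] at hw'
      have := baseColor_eq_one hi
        ((legColor_eq_baseColor (by rw [hw']; norm_num)).symm.trans hw')
      omega
    · omega

theorem eq_of_colorDist_leg_eq (hk : 2 * m + 2 ≤ k) (h0 : ∃ i, τ i = 0) (h1 : ∃ i, τ i = 1)
    (hf : ∀ i x, f i x ≤ 2)
    (hinj : ∀ i i', τ i = τ i' → (∀ x < m, f i x = f i' x) → i = i')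
    {i i' : Fin n} {j j' : Fin k}
    (h : ∀ x < m + 3, colorDist m τ f (legVert i j) x = colorDist m τ f (legVert i' j') x) :
    i = i' ∧ j = j' := by
  have hd := colorDist_absentColor (m := m) (f := f) (by omega) h0 h1 i j
  have hd' := colorDist_absentColor (m := m) (f := f) (by omega) h0 h1 i' j'
  have hlt := absentColor_lt (τ i)
  have hlt' := absentColor_lt (τ i')
  have hq := h (absentColor (τ i)) (by omega)
  have hq' := h (absentColor (τ i')) (by omega)
  by_cases ha : absentColor (τ i) = absentColor (τ i')
  · have hdist := absentDist_congr ha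
    rw [← ha] at hd'
    obtain rfl : j = j' := by omega
    refine ⟨hinj _ _ ?_ fun x hx =>
      eq_of_colorDist_eq hk hx (fun i => hf i x) (h (x + 3) (by omega)), rfl⟩
    by_cases hz : absentDist (τ i') = 0
    · have ht := (lt_two_iff_absentDist (τ i)).2 (hdist.trans hz)
      have ht' := (lt_two_iff_absentDist (τ i')).2 hz
      have hp := colorDist_one_mod_two (m := m) (f := f) (by omega) ht j
      have hp' := colorDist_one_mod_two (m := m) (f := f) (by omega) ht' j
      have h1 := h 1 (by omega)
      exact Fin.ext (by omega)
    · exact eq_of_absentColor_eq ha hz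
  · have hle := colorDist_le_of_ne_absentColor (m := m) (f := f) (by omega) i j hlt' (Ne.symm ha)
    have hle' := colorDist_le_of_ne_absentColor (m := m) (f := f) (by omega) i' j' hlt ha
    have hne : absentDist (τ i) ≠ 0 ∨ absentDist (τ i') ≠ 0 := by
      by_contra! hz
      exact ha (((absentColor_eq_zero_iff _).2 hz.1).trans
        ((absentColor_eq_zero_iff _).2 hz.2).symm)
    omega

theorem exists_colorDist_hub_ne (hk : 0 < k) (h0 : ∃ i, τ i = 0) (h1 : ∃ i, τ i = 1)
    (i : Fin n) (j : Fin k) :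
    ∃ x < m + 3, colorDist m τ f (hub : PalmVert n (fun _ => k)) x ≠
      colorDist m τ f (legVert i j) x := by
  refine ⟨absentColor (τ i), (absentColor_lt _).trans_le (by omega), ?_⟩
  have := colorDist_hub_absentColor_le (m := m) (f := f) hk h0 h1 (t := τ i)
  rw [colorDist_absentColor hk h0 h1]
  omega

theorem exists_isLocatingColoring_of_types (hk : 2 * m + 2 ≤ k) (h0 : ∃ i, τ i = 0)
    (h1 : ∃ i, τ i = 1) (hf : ∀ i x, f i x ≤ 2)
    (hinj : ∀ i i', τ i = τ i' → (∀ x < m, f i x = f i' x) → i = i') :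
    ∃ c : PalmVert n (fun _ => k) → Fin (m + 3),
      IsLocatingColoring (Palm n (fun _ => k)) c := by
  refine ⟨fun v => ⟨palmColor m τ f v, palmColor_lt v⟩,
    fun u v h h' => palmColor_ne_of_adj h (Fin.ext_iff.1 h'), fun u v huv => ?_⟩
  suffices ∃ x < m + 3, colorDist m τ f u x ≠ colorDist m τ f v x by
    obtain ⟨x, hx, h⟩ := this
    refine ⟨⟨x, hx⟩, ?_⟩
    have hS : (fun v : PalmVert n (fun _ => k) =>
        (⟨palmColor m τ f v, palmColor_lt v⟩ : Fin (m + 3))) ⁻¹' {⟨x, hx⟩} =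
        {w | palmColor m τ f w = x} := by
      ext w
      simp
    rwa [hS]
  obtain rfl | ⟨i, j, rfl⟩ := palmVert_cases u <;> obtain rfl | ⟨i', j', rfl⟩ := palmVert_cases v
  · exact absurd rfl huv
  · exact exists_colorDist_hub_ne (by omega) h0 h1 _ _
  · obtain ⟨x, hx, h⟩ := exists_colorDist_hub_ne (m := m) (f := f) (by omega) h0 h1 i j
    exact ⟨x, hx, h.symm⟩
  · by_contra! h
    exact huv (legVert_inj.2 (eq_of_colorDist_leg_eq hk h0 h1 hf hinj h))

theorem exists_isLocatingColoring (hn : 2 ≤ n) (hnm : n ≤ 4 * 3 ^ m) (hk : 2 * m + 2 ≤ k) :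
    ∃ c : PalmVert n (fun _ => k) → Fin (m + 3),
      IsLocatingColoring (Palm n (fun _ => k)) c := by
  classical
  let s₀ : Finset (Fin 4 × (Fin m → Fin 3)) := {(0, 0), (1, 0)}
  obtain ⟨s, hs₀, hs⟩ := Finset.exists_superset_card_eq (s := s₀) (n := n)
    (Finset.card_le_two.trans hn) (by simpa using hnm)
  let e := s.equivFinOfCardEq hs
  have hmem : ∀ p ∈ s₀, ∃ i, (e.symm i).1 = p := fun p hp =>
    ⟨e ⟨p, hs₀ hp⟩, by rw [e.symm_apply_apply]⟩
  refine exists_isLocatingColoring_of_types (τ := fun i => (e.symm i).1.1)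
    (f := fun i x => if hx : x < m then (e.symm i).1.2 ⟨x, hx⟩ else 0) hk ?_ ?_ ?_ ?_
  · obtain ⟨i, hi⟩ := hmem (0, 0) (by simp [s₀])
    exact ⟨i, by rw [hi]⟩
  · obtain ⟨i, hi⟩ := hmem (1, 0) (by simp [s₀])
    exact ⟨i, by rw [hi]⟩
  · intro i x
    split_ifs <;> omega
  · intro i i' h h'
    refine e.symm.injective (Subtype.ext (Prod.ext h (funext fun x => Fin.ext ?_)))
    simpa using h' x x.2

end Construction

/-- For `n ≥ 3` and any integer `k ≥ 2⌈log_3(n/4)⌉ + 4`, the regular palm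
`S_n(k)` satisfies `χ_L(S_n(k)) = ⌈log_3(n/4)⌉ + 3`. -/
theorem locatingChromaticNumber_regularPalm_long (n : ℕ) (hn : 3 ≤ n) (k : ℕ)
    (hk : 2 * ⌈Real.logb 3 ((n : ℝ) / 4)⌉ + 4 ≤ (k : ℤ)) :
    (locatingChromaticNumber (Palm n (fun _ => k)) : ℤ) =
      ⌈Real.logb 3 ((n : ℝ) / 4)⌉ + 3 := by
  have hn' : (3 : ℝ) ≤ n := by exact_mod_cast hn
  have hceil : ∀ m : ℕ, ⌈Real.logb 3 ((n : ℝ) / 4)⌉ ≤ (m : ℤ) ↔ n ≤ 4 * 3 ^ m := by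
    intro m
    rw [Int.ceil_le, Real.logb_le_iff_le_rpow (by norm_num) (by positivity), Int.cast_natCast,
      Real.rpow_natCast, div_le_iff₀' (by norm_num)]
    exact_mod_cast Iff.rfl
  have hnonneg : 0 ≤ ⌈Real.logb 3 ((n : ℝ) / 4)⌉ := by
    rw [← Int.sub_one_lt_iff, Int.lt_ceil, Real.lt_logb_iff_rpow_lt (by norm_num) (by positivity)]
    norm_num [Real.rpow_neg_one]
    linarith
  obtain ⟨m, hm⟩ := Int.eq_ofNat_of_zero_le hnonneg
  rw [hm] at hk hceil ⊢
  obtain ⟨c, hc⟩ := exists_isLocatingColoring (k := k) (by omega) ((hceil m).1 le_rfl) (by omega)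
  have hmem : m + 3 ∈ {q : ℕ | ∃ c : PalmVert n (fun _ => k) → Fin q,
    IsLocatingColoring (Palm n (fun _ => k)) c} := ⟨c, hc⟩
  obtain ⟨c', hc'⟩ := Nat.sInf_mem ⟨_, hmem⟩
  obtain ⟨m', hm', hle⟩ := exists_le_four_mul_three_pow hn (by omega) hc'
  have h1 := (hceil m').2 hle
  have h2 := Nat.sInf_le hmem
  unfold locatingChromaticNumber
  omega
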